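/- Fix p ≥ 1, β ∈ ℝᵖ, and λ ∈ ℝᵖ with nonnegative nondecreasing entries, and let h ∼ N(0, I_p) be a standard Gaussian vector. Define F_p(c,τ) = (1/p)·E[ e_{J_λ}(c·h + β; τ) − J_λ(β) ] for (c,τ) ∈ ℝ × (0,∞). Then F_p is jointly convex in (c,τ) and continuously differentiable on ℝ × (0,∞), with partial derivatives ∂F_p/∂c (c,τ) = (1/(pτ))·E[ ⟨ c·h + β − Prox_{τλ}(c·h + β), h ⟩ ] and ∂F_p/∂τ (c,τ) = −(1/(2pτ²))·E[ ‖ c·h + β − Prox_{τλ}(c·h + β) ‖² ], where Prox_{τλ} denotes the SLOPE proximal operator with weight vector (τλ_1,…,τλ_p). -/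

import Mathlib

open MeasureTheory Filter Finset Topology ProbabilityTheory

/-- The nondecreasing rearrangement of the absolute values of the entries of `x`. -/
noncomputable def sortedAbs {p : ℕ} (x : Fin p → ℝ) : Fin p → ℝ :=
  fun i => |x (Tuple.sort (fun j => |x j|) i)|

/-- The sorted ℓ1 norm `J_λ(x) = ∑ λ_i |x|_(i)`. -/
noncomputable def sortedL1 {p : ℕ} (lam x : Fin p → ℝ) : ℝ :=
  ∑ i, lam i * sortedAbs x i

/-- The SLOPE objective `(1/2)‖y - x‖² + J_λ(x)`. -/
noncomputable def slopeObj {p : ℕ} (lam y x : Fin p → ℝ) : ℝ :=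
  (1 / 2) * ∑ i, (y i - x i) ^ 2 + sortedL1 lam x

open Classical in
/-- The SLOPE proximal operator: the (unique) minimizer of the SLOPE objective. -/
noncomputable def slopeProx {p : ℕ} (lam y : Fin p → ℝ) : Fin p → ℝ :=
  if h : ∃ x : Fin p → ℝ, ∀ z : Fin p → ℝ, slopeObj lam y x ≤ slopeObj lam y z
  then h.choose else y

/-- The Moreau envelope `e_{J_λ}(x; τ) = min_v (1/(2τ))‖x − v‖² + J_λ(v)`. -/
noncomputable def moreauJ {p : ℕ} (lam x : Fin p → ℝ) (τ : ℝ) : ℝ :=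
  ⨅ v : Fin p → ℝ, ((1 / (2 * τ)) * ∑ i, (x i - v i) ^ 2 + sortedL1 lam v)

/-- The standard Gaussian measure `N(0, I_p)` on `ℝᵖ`. -/
noncomputable def gaussPi (p : ℕ) : Measure (Fin p → ℝ) :=
  Measure.pi fun _ => gaussianReal 0 1

/-- `F_p(c,τ) = (1/p)·E[ e_{J_λ}(c·h + β; τ) − J_λ(β) ]`, `h ∼ N(0, I_p)`. -/
noncomputable def Fp {p : ℕ} (lam β : Fin p → ℝ) (c τ : ℝ) : ℝ :=
  (∫ h, (moreauJ lam (fun i => c * h i + β i) τ - sortedL1 lam β) ∂gaussPi p) / p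

/-- The claimed partial derivative `∂F_p/∂c (c,τ)
  = (1/(pτ))·E[⟨ c·h + β − Prox_{τλ}(c·h + β), h ⟩]`. -/
noncomputable def FpDc {p : ℕ} (lam β : Fin p → ℝ) (c τ : ℝ) : ℝ :=
  (∫ h, ∑ i, (c * h i + β i
      - slopeProx (fun j => τ * lam j) (fun j => c * h j + β j) i) * h i
    ∂gaussPi p) / (p * τ)

/-- The claimed partial derivative `∂F_p/∂τ (c,τ)
  = −(1/(2pτ²))·E[‖ c·h + β − Prox_{τλ}(c·h + β) ‖²]`. -/
noncomputable def FpDτ {p : ℕ} (lam β : Fin p → ℝ) (c τ : ℝ) : ℝ :=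
  -(∫ h, ∑ i, (c * h i + β i
      - slopeProx (fun j => τ * lam j) (fun j => c * h j + β j) i) ^ 2
    ∂gaussPi p) / (2 * p * τ ^ 2)

/-!
Let `P` be a proximal operator of a convex `K`-Lipschitz function `f` on an inner product space.
The vector `u = (y - P t y) / t` is a subgradient of `f` at `P t y`, so `‖u‖ ≤ K`, and combining
it with the Young inequality shows that `(u, -‖u‖² / 2)` is a subgradient of `(y, t) ↦ e_f(y; t)`.
Integrating this inequality along `y = c X + b` gives a subgradient of `F` at each `(c, t)`, which
depends continuously on `(c, t)` by dominated convergence since `P` is Lipschitz in `(t, y)`. A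
function with a continuous selection of subgradients is convex and continuously differentiable.
-/

open scoped NNReal RealInnerProductSpace

section Subgradient

variable {V : Type*} [NormedAddCommGroup V] [NormedSpace ℝ V]
  {φ : V → ℝ} {s : Set V} {x y : V} {L M : V →L[ℝ] ℝ}

/-- `L` is a subgradient at `x` of the restriction of `φ` to `s`: the affine function with slope `L`
through `(x, φ x)` lies below `φ` on `s`. -/
def IsSubgradientWithin (φ : V → ℝ) (L : V →L[ℝ] ℝ) (s : Set V) (x : V) : Prop :=
  ∀ y ∈ s, φ x + L (y - x) ≤ φ y

lemma IsSubgradientWithin.sub_apply_sub_nonneg (hL : IsSubgradientWithin φ L s x)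
    (hM : IsSubgradientWithin φ M s y) (hx : x ∈ s) (hy : y ∈ s) : 0 ≤ (L - M) (x - y) := by
  have hxy := hL y hy
  have hyx := hM x hx
  rw [← neg_sub x y, map_neg] at hxy
  rw [sub_apply]
  linarith

lemma IsSubgradientWithin.norm_le {K : ℝ≥0} (hL : IsSubgradientWithin φ L Set.univ x)
    (hφ : LipschitzWith K φ) : ‖L‖ ≤ K := by
  have apply_le (z : V) : L z ≤ K * ‖z‖ := by
    have hsub := hL (x + z) (Set.mem_univ _)
    have hlip := hφ.le_add_mul (x + z) x
    rw [add_sub_cancel_left] at hsub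
    rw [dist_self_add_left] at hlip
    linarith
  refine L.opNorm_le_bound K.coe_nonneg fun z => abs_le'.2 ⟨apply_le z, ?_⟩
  simpa only [map_neg, norm_neg] using apply_le (-z)

lemma convexOn_of_isSubgradientWithin {G : V → V →L[ℝ] ℝ} (hs : Convex ℝ s)
    (hG : ∀ x ∈ s, IsSubgradientWithin φ (G x) s x) : ConvexOn ℝ s φ := by
  refine ⟨hs, fun x hx y hy a b ha hb hab => ?_⟩
  set w := a • x + b • y with hw
  have hsub := hG w (hs hx hy ha hb hab)
  have slopes_cancel : a * G w (x - w) + b * G w (y - w) = 0 := by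
    rw [← smul_eq_mul, ← smul_eq_mul, ← map_smul, ← map_smul, ← map_add, smul_sub, smul_sub,
      sub_add_sub_comm, ← add_smul, hab, one_smul, ← hw, sub_self, map_zero]
  calc φ w = a * (φ w + G w (x - w)) + b * (φ w + G w (y - w)) := by
        linear_combination -φ w * hab - slopes_cancel
    _ ≤ a • φ x + b • φ y := by
        rw [smul_eq_mul, smul_eq_mul]
        gcongr
        exacts [hsub x hx, hsub y hy]

/-- Subgradient inequalities at both ends give
`0 ≤ φ y - φ x - G x (y - x) ≤ (G y - G x) (y - x)`, which is `o(‖y - x‖)`. -/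
lemma hasFDerivAt_of_isSubgradientWithin {G : V → V →L[ℝ] ℝ} (hs : s ∈ 𝓝 x)
    (hG : ∀ x ∈ s, IsSubgradientWithin φ (G x) s x) (hcont : ContinuousAt G x) :
    HasFDerivAt φ (G x) x := by
  have hG_sub : Tendsto (fun y => ‖G y - G x‖) (𝓝 x) (𝓝 0) :=
    tendsto_iff_norm_sub_tendsto_zero.1 hcont
  rw [hasFDerivAt_iff_isLittleO, Asymptotics.isLittleO_iff]
  intro ε hε
  filter_upwards [hs, hG_sub.eventually_le_const hε] with y hy hyε
  have hxy := hG x (mem_of_mem_nhds hs) y hy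
  have hyx := hG y hy x (mem_of_mem_nhds hs)
  rw [← neg_sub y x, map_neg] at hyx
  calc ‖φ y - φ x - G x (y - x)‖ = φ y - φ x - G x (y - x) :=
        Real.norm_of_nonneg (by linarith)
    _ ≤ (G y - G x) (y - x) := by rw [sub_apply]; linarith
    _ ≤ ‖G y - G x‖ * ‖y - x‖ := (le_abs_self _).trans ((G y - G x).le_opNorm _)
    _ ≤ ε * ‖y - x‖ := by gcongr

end Subgradient

section MoreauEnvelope

variable {E : Type*} [NormedAddCommGroup E] {f : E → ℝ} {K : ℝ≥0} {t : ℝ} {x y : E}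

/-- The objective `v ↦ (1/(2t))‖y - v‖² + f v` whose infimum is the Moreau envelope. -/
noncomputable def moreauObjective (f : E → ℝ) (t : ℝ) (y v : E) : ℝ :=
  1 / (2 * t) * ‖y - v‖ ^ 2 + f v

/-- The Moreau envelope `e_f(y; t)`. -/
noncomputable def moreauEnvelope (f : E → ℝ) (t : ℝ) (y : E) : ℝ :=
  ⨅ v, moreauObjective f t y v

/-- `x` is a proximal point of `t f` at `y`, phrased through the Moreau objective of parameter `t`
rather than through `(1/2)‖y - v‖² + t f v`, which has the same minimizers when `0 < t`. -/
def IsProx (f : E → ℝ) (t : ℝ) (y x : E) : Prop :=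
  ∀ v, moreauObjective f t y x ≤ moreauObjective f t y v

/-- `P t` is a proximal operator of `t f` for every `0 < t`. -/
def IsProxMap (f : E → ℝ) (P : ℝ → E → E) : Prop :=
  ∀ ⦃t : ℝ⦄, 0 < t → ∀ y, IsProx f t y (P t y)

/-- The Yosida approximation `(y - P t y) / t` attached to a proximal operator `P`; it is the
gradient in `y` of the Moreau envelope. -/
noncomputable def yosida [NormedSpace ℝ E] (P : ℝ → E → E) (t : ℝ) (y : E) : E :=
  t⁻¹ • (y - P t y)

lemma exists_isProx [ProperSpace E] (hf : LipschitzWith K f) (ht : 0 < t) (y : E) :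
    ∃ x, IsProx f t y x := by
  have hcont : Continuous (moreauObjective f t y) := by
    have := hf.continuous
    unfold moreauObjective
    fun_prop
  refine hcont.exists_forall_le' y ?_
  filter_upwards [(isCompact_closedBall y (2 * t * K)).compl_mem_cocompact] with v hv
  have hfar : 2 * t * K < ‖y - v‖ := by simpa [dist_eq_norm'] using hv
  have hlip := hf.le_add_mul y v
  have quadratic_dominates : K * ‖y - v‖ ≤ 1 / (2 * t) * ‖y - v‖ ^ 2 := by
    rw [one_div_mul_eq_div, le_div_iff₀ (by positivity)]
    nlinarith [norm_nonneg (y - v)]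
  rw [dist_eq_norm] at hlip
  simp only [moreauObjective, sub_self, norm_zero]
  linarith

lemma IsProx.moreauEnvelope_eq (hx : IsProx f t y x) :
    moreauEnvelope f t y = moreauObjective f t y x :=
  IsLeast.csInf_eq ⟨Set.mem_range_self x, Set.forall_mem_range.2 hx⟩

end MoreauEnvelope

section Prox

variable {E : Type*} [NormedAddCommGroup E] [InnerProductSpace ℝ E]
  {f : E → ℝ} {K : ℝ≥0} {P : ℝ → E → E} {s t : ℝ} {w x y z : E}

lemma IsProx.inner_le_of_mem_Ioc (hf : ConvexOn ℝ Set.univ f) (ht : 0 < t) (hx : IsProx f t y x)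
    (z : E) {r : ℝ} (hr : r ∈ Set.Ioc 0 1) :
    ⟪t⁻¹ • (y - x), z - x⟫ ≤ f z - f x + r * (1 / (2 * t) * ‖z - x‖ ^ 2) := by
  have hmin := hx (x + r • (z - x))
  have hconv : f (x + r • (z - x)) ≤ (1 - r) * f x + r * f z := by
    have := hf.2 (Set.mem_univ x) (Set.mem_univ z) (sub_nonneg.2 hr.2) hr.1.le (sub_add_cancel 1 r)
    rwa [smul_eq_mul, smul_eq_mul, show (1 - r) • x + r • z = x + r • (z - x) by module] at this
  have hexpand : ‖y - (x + r • (z - x))‖ ^ 2 =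
      ‖y - x‖ ^ 2 - 2 * r * ⟪y - x, z - x⟫ + r ^ 2 * ‖z - x‖ ^ 2 := by
    rw [← sub_sub, norm_sub_sq_real, real_inner_smul_right, norm_smul, mul_pow, Real.norm_eq_abs,
      sq_abs]
    ring
  rw [moreauObjective, moreauObjective, hexpand] at hmin
  rw [real_inner_smul_left]
  refine le_of_mul_le_mul_left ?_ hr.1
  calc r * (t⁻¹ * ⟪y - x, z - x⟫) = 1 / (2 * t) * (2 * r * ⟪y - x, z - x⟫) := by
        field_simp
    _ ≤ r * (f z - f x + r * (1 / (2 * t) * ‖z - x‖ ^ 2)) := by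
        linarith

lemma IsProx.isSubgradientWithin (hf : ConvexOn ℝ Set.univ f) (ht : 0 < t)
    (hx : IsProx f t y x) :
    IsSubgradientWithin f (innerSL ℝ (t⁻¹ • (y - x))) Set.univ x := by
  intro z _
  have hlim : Tendsto (fun r : ℝ => f z - f x + r * (1 / (2 * t) * ‖z - x‖ ^ 2)) (𝓝[>] 0)
      (𝓝 (f z - f x)) := by
    refine Tendsto.mono_left ?_ nhdsWithin_le_nhds
    simpa using (by fun_prop : Continuous fun r : ℝ =>
      f z - f x + r * (1 / (2 * t) * ‖z - x‖ ^ 2)).tendsto 0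
  have hle : ⟪t⁻¹ • (y - x), z - x⟫ ≤ f z - f x :=
    ge_of_tendsto hlim <| by
      filter_upwards [Ioc_mem_nhdsGT zero_lt_one] with r hr
      exact hx.inner_le_of_mem_Ioc hf ht z hr
  rw [innerSL_apply_apply]
  linarith

lemma IsProx.norm_inv_smul_sub_le (hf : ConvexOn ℝ Set.univ f) (hK : LipschitzWith K f)
    (ht : 0 < t) (hx : IsProx f t y x) : ‖t⁻¹ • (y - x)‖ ≤ K := by
  simpa only [innerSL_apply_norm] using (hx.isSubgradientWithin hf ht).norm_le hK

/-- With `u = (y - x) / t` and `v = (z - w) / s` one has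
`x - w = (y - z) - t (u - v) - (t - s) v`, and `⟪u - v, x - w⟫ ≥ 0` since `u` and `v` are
subgradients of `f` at `x` and `w`. -/
lemma IsProx.norm_sub_le (hf : ConvexOn ℝ Set.univ f) (hK : LipschitzWith K f) (ht : 0 < t)
    (hs : 0 < s) (hx : IsProx f t y x) (hw : IsProx f s z w) :
    ‖x - w‖ ≤ ‖y - z‖ + K * |t - s| := by
  set u := t⁻¹ • (y - x)
  set v := s⁻¹ • (z - w)
  have hmono : 0 ≤ ⟪u - v, x - w⟫ := by
    simpa only [← map_sub, innerSL_apply_apply] using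
      (hx.isSubgradientWithin hf ht).sub_apply_sub_nonneg (hw.isSubgradientWithin hf hs)
        (Set.mem_univ _) (Set.mem_univ _)
  have hdecomp : x - w = (y - z - (t - s) • v) - t • (u - v) := by
    have htu : t • u = y - x := smul_inv_smul₀ ht.ne' _
    have hsv : s • v = z - w := smul_inv_smul₀ hs.ne' _
    rw [smul_sub, sub_smul, htu, hsv]
    abel
  have hsq : ‖x - w‖ * ‖x - w‖ ≤ ‖y - z - (t - s) • v‖ * ‖x - w‖ :=
    calc ‖x - w‖ * ‖x - w‖ = ⟪(y - z - (t - s) • v) - t • (u - v), x - w⟫ := by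
          rw [← hdecomp, real_inner_self_eq_norm_mul_norm]
      _ = ⟪y - z - (t - s) • v, x - w⟫ - t * ⟪u - v, x - w⟫ := by
          rw [inner_sub_left, real_inner_smul_left]
      _ ≤ ⟪y - z - (t - s) • v, x - w⟫ := sub_le_self _ (mul_nonneg ht.le hmono)
      _ ≤ ‖y - z - (t - s) • v‖ * ‖x - w‖ := real_inner_le_norm _ _
  have hle : ‖x - w‖ ≤ ‖y - z - (t - s) • v‖ := by
    by_contra! hlt
    exact hsq.not_gt (mul_lt_mul_of_pos_right hlt ((norm_nonneg _).trans_lt hlt))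
  calc ‖x - w‖ ≤ ‖y - z‖ + ‖(t - s) • v‖ := hle.trans (_root_.norm_sub_le _ _)
    _ ≤ ‖y - z‖ + K * |t - s| := by
        rw [norm_smul, Real.norm_eq_abs, mul_comm]
        gcongr
        exact hw.norm_inv_smul_sub_le hf hK hs

/-- The subgradient inequality for the Moreau envelope, jointly in the point and the parameter.
With `u = (y - x) / t`, it adds `f v ≥ f x + ⟪u, v - x⟫` to the Young inequality
`‖z - v‖² / (2s) ≥ ⟪u, z - v⟫ - s‖u‖² / 2`. -/
lemma IsProx.moreauEnvelope_add_le (hf : ConvexOn ℝ Set.univ f) (ht : 0 < t) (hs : 0 < s)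
    (hx : IsProx f t y x) (z : E) :
    moreauEnvelope f t y + ⟪t⁻¹ • (y - x), z - y⟫ - 1 / 2 * ‖t⁻¹ • (y - x)‖ ^ 2 * (s - t) ≤
      moreauEnvelope f s z := by
  refine le_ciInf fun v => ?_
  set u := t⁻¹ • (y - x)
  have htu : y - x = t • u := (smul_inv_smul₀ ht.ne' _).symm
  have hsub : f x + ⟪u, v - x⟫ ≤ f v := hx.isSubgradientWithin hf ht v (Set.mem_univ _)
  have young : ⟪u, z - v⟫ - s / 2 * ‖u‖ ^ 2 ≤ 1 / (2 * s) * ‖z - v‖ ^ 2 := by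
    have hsq : ‖z - v - s • u‖ ^ 2 = ‖z - v‖ ^ 2 - 2 * s * ⟪u, z - v⟫ + s ^ 2 * ‖u‖ ^ 2 := by
      rw [norm_sub_sq_real, real_inner_smul_right, real_inner_comm, norm_smul, mul_pow,
        Real.norm_eq_abs, sq_abs]
      ring
    rw [one_div_mul_eq_div, le_div_iff₀ (by positivity)]
    linarith [sq_nonneg ‖z - v - s • u‖]
  have henv : moreauEnvelope f t y = t / 2 * ‖u‖ ^ 2 + f x := by
    rw [hx.moreauEnvelope_eq, moreauObjective, htu, norm_smul, mul_pow, Real.norm_eq_abs, sq_abs]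
    field_simp
  have hinner : ⟪u, z - y⟫ = ⟪u, z - v⟫ + ⟪u, v - x⟫ - t * ‖u‖ ^ 2 := by
    rw [← inner_add_right, ← real_inner_self_eq_norm_sq, ← real_inner_smul_right,
      ← inner_sub_right, ← htu]
    congr 1
    abel
  rw [henv, hinner, moreauObjective]
  linarith

namespace IsProxMap

lemma norm_yosida_le (hP : IsProxMap f P) (hf : ConvexOn ℝ Set.univ f) (hK : LipschitzWith K f)
    (ht : 0 < t) (y : E) : ‖yosida P t y‖ ≤ K :=
  (hP ht y).norm_inv_smul_sub_le hf hK ht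

lemma lipschitzOnWith (hP : IsProxMap f P) (hf : ConvexOn ℝ Set.univ f)
    (hK : LipschitzWith K f) :
    LipschitzOnWith (1 + K) (fun q : ℝ × E => P q.1 q.2) {q | 0 < q.1} := by
  refine LipschitzOnWith.of_dist_le_mul fun q hq r hr => ?_
  have hfst : |q.1 - r.1| ≤ dist q r := le_max_left _ _
  have hsnd : ‖q.2 - r.2‖ ≤ dist q r := dist_eq_norm q.2 r.2 ▸ le_max_right _ _
  calc dist (P q.1 q.2) (P r.1 r.2) ≤ ‖q.2 - r.2‖ + K * |q.1 - r.1| :=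
        dist_eq_norm (P q.1 q.2) _ ▸ (hP hq q.2).norm_sub_le hf hK hq hr (hP hr r.2)
    _ ≤ dist q r + K * dist q r := by gcongr
    _ = ↑(1 + K) * dist q r := by push_cast; ring

lemma continuousOn_yosida (hP : IsProxMap f P) (hf : ConvexOn ℝ Set.univ f)
    (hK : LipschitzWith K f) :
    ContinuousOn (fun q : ℝ × E => yosida P q.1 q.2) {q | 0 < q.1} :=
  (continuousOn_fst.inv₀ fun _ hq => ne_of_gt hq).smul
    (continuousOn_snd.sub (hP.lipschitzOnWith hf hK).continuousOn)

lemma lipschitzWith_moreauEnvelope (hP : IsProxMap f P) (hf : ConvexOn ℝ Set.univ f)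
    (hK : LipschitzWith K f) (ht : 0 < t) : LipschitzWith K (moreauEnvelope f t) := by
  refine LipschitzWith.of_le_add_mul K fun y z => ?_
  have hsub := (hP ht y).moreauEnvelope_add_le hf ht ht z
  have hinner : ⟪yosida P t y, y - z⟫ ≤ K * ‖y - z‖ :=
    (real_inner_le_norm _ _).trans (by gcongr; exact hP.norm_yosida_le hf hK ht y)
  rw [← neg_sub y z, inner_neg_right, ← yosida] at hsub
  rw [dist_eq_norm]
  linarith

end IsProxMap

end Prox

lemma integrable_comp_of_lipschitzWith {Ω E : Type*} [MeasurableSpace Ω] {μ : Measure Ω}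
    [IsFiniteMeasure μ] [NormedAddCommGroup E] {φ : E → ℝ} {K : ℝ≥0} (hφ : LipschitzWith K φ)
    {X : Ω → E} (hX : Integrable X μ) : Integrable (fun ω => φ (X ω)) μ := by
  refine ((integrable_const ‖φ 0‖).add (hX.norm.const_mul K)).mono'
    (hφ.continuous.comp_aestronglyMeasurable hX.1) (Eventually.of_forall fun ω => ?_)
  have hdist := hφ.norm_sub_le (X ω) 0
  rw [sub_zero] at hdist
  have := norm_le_norm_add_norm_sub' (φ (X ω)) (φ 0)
  exact this.trans (by simpa using hdist)

section ExpectedEnvelope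

variable {Ω E : Type*} [MeasurableSpace Ω] [NormedAddCommGroup E]

/-- The average over `μ` of the Moreau envelope of `f` along the random affine curve
`c ↦ c X + b`, normalized by `f b`. -/
noncomputable def expectedEnvelope [NormedSpace ℝ E] (f : E → ℝ) (μ : Measure Ω) (X : Ω → E)
    (b : E) (c t : ℝ) : ℝ :=
  ∫ ω, (moreauEnvelope f t (c • X ω + b) - f b) ∂μ

/-- The partial derivative in `c` of `expectedEnvelope f μ X b c t`, written through a proximal
operator `P` of `f`. -/
noncomputable def expectedEnvelopeDc [InnerProductSpace ℝ E] (P : ℝ → E → E) (μ : Measure Ω)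
    (X : Ω → E) (b : E) (c t : ℝ) : ℝ :=
  ∫ ω, ⟪yosida P t (c • X ω + b), X ω⟫ ∂μ

/-- The partial derivative in `t` of `expectedEnvelope f μ X b c t`, written through a proximal
operator `P` of `f`. -/
noncomputable def expectedEnvelopeDt [NormedSpace ℝ E] (P : ℝ → E → E) (μ : Measure Ω)
    (X : Ω → E) (b : E) (c t : ℝ) : ℝ :=
  ∫ ω, -(1 / 2) * ‖yosida P t (c • X ω + b)‖ ^ 2 ∂μ

/-- The Fréchet derivative of `expectedEnvelope`, as a function of the pair `(c, t)`. -/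
noncomputable def expectedEnvelopeFDeriv [InnerProductSpace ℝ E] (P : ℝ → E → E)
    (μ : Measure Ω) (X : Ω → E) (b : E) (q : ℝ × ℝ) : ℝ × ℝ →L[ℝ] ℝ :=
  expectedEnvelopeDc P μ X b q.1 q.2 • ContinuousLinearMap.fst ℝ ℝ ℝ +
    expectedEnvelopeDt P μ X b q.1 q.2 • ContinuousLinearMap.snd ℝ ℝ ℝ

variable [InnerProductSpace ℝ E] {f : E → ℝ} {K : ℝ≥0} {P : ℝ → E → E} {μ : Measure Ω}
  {X : Ω → E} {t : ℝ}

namespace IsProxMap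

lemma continuousOn_yosida_affine (hP : IsProxMap f P) (hf : ConvexOn ℝ Set.univ f)
    (hK : LipschitzWith K f) (h b : E) :
    ContinuousOn (fun q : ℝ × ℝ => yosida P q.2 (q.1 • h + b)) {q | 0 < q.2} :=
  (hP.continuousOn_yosida hf hK).comp (f := fun q : ℝ × ℝ => (q.2, q.1 • h + b))
    (by fun_prop) fun _ hq => hq

lemma aestronglyMeasurable_yosida (hP : IsProxMap f P) (hf : ConvexOn ℝ Set.univ f)
    (hK : LipschitzWith K f) (hX : AEStronglyMeasurable X μ) (b : E) (c : ℝ) (ht : 0 < t) :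
    AEStronglyMeasurable (fun ω => yosida P t (c • X ω + b)) μ :=
  ((hP.continuousOn_yosida hf hK).comp_continuous (f := fun h => (t, c • h + b)) (by fun_prop)
    fun _ => ht).comp_aestronglyMeasurable hX

lemma norm_inner_yosida_le (hP : IsProxMap f P) (hf : ConvexOn ℝ Set.univ f)
    (hK : LipschitzWith K f) (ht : 0 < t) (y h : E) : ‖⟪yosida P t y, h⟫‖ ≤ K * ‖h‖ :=
  (norm_inner_le_norm _ _).trans (by gcongr; exact hP.norm_yosida_le hf hK ht y)

lemma norm_neg_half_mul_sq_yosida_le (hP : IsProxMap f P) (hf : ConvexOn ℝ Set.univ f)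
    (hK : LipschitzWith K f) (ht : 0 < t) (y : E) :
    ‖-(1 / 2) * ‖yosida P t y‖ ^ 2‖ ≤ 1 / 2 * (K : ℝ) ^ 2 := by
  rw [norm_mul, norm_neg, norm_pow, norm_norm, Real.norm_of_nonneg one_half_pos.le]
  gcongr
  exact hP.norm_yosida_le hf hK ht y

lemma integrable_inner_yosida (hP : IsProxMap f P) (hf : ConvexOn ℝ Set.univ f)
    (hK : LipschitzWith K f) (hX : Integrable X μ) (b : E) (c : ℝ) (ht : 0 < t) :
    Integrable (fun ω => ⟪yosida P t (c • X ω + b), X ω⟫) μ :=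
  (hX.norm.const_mul K).mono' ((hP.aestronglyMeasurable_yosida hf hK hX.1 b c ht).inner hX.1)
    (Eventually.of_forall fun _ => hP.norm_inner_yosida_le hf hK ht _ _)

lemma continuousOn_expectedEnvelopeDc (hP : IsProxMap f P) (hf : ConvexOn ℝ Set.univ f)
    (hK : LipschitzWith K f) (hX : Integrable X μ) (b : E) :
    ContinuousOn (fun q : ℝ × ℝ => expectedEnvelopeDc P μ X b q.1 q.2) {q | 0 < q.2} :=
  continuousOn_of_dominated
    (fun q hq => (hP.integrable_inner_yosida hf hK hX b q.1 hq).1)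
    (fun _ hq => Eventually.of_forall fun _ => hP.norm_inner_yosida_le hf hK hq _ _)
    (hX.norm.const_mul K)
    (Eventually.of_forall fun ω =>
      (hP.continuousOn_yosida_affine hf hK (X ω) b).inner continuousOn_const)

variable [IsFiniteMeasure μ]

lemma integrable_neg_half_mul_sq_yosida (hP : IsProxMap f P) (hf : ConvexOn ℝ Set.univ f)
    (hK : LipschitzWith K f) (hX : AEStronglyMeasurable X μ) (b : E) (c : ℝ) (ht : 0 < t) :
    Integrable (fun ω => -(1 / 2) * ‖yosida P t (c • X ω + b)‖ ^ 2) μ :=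
  (integrable_const _).mono'
    (((hP.aestronglyMeasurable_yosida hf hK hX b c ht).norm.pow 2).const_mul _)
    (Eventually.of_forall fun _ => hP.norm_neg_half_mul_sq_yosida_le hf hK ht _)

lemma continuousOn_expectedEnvelopeDt (hP : IsProxMap f P) (hf : ConvexOn ℝ Set.univ f)
    (hK : LipschitzWith K f) (hX : AEStronglyMeasurable X μ) (b : E) :
    ContinuousOn (fun q : ℝ × ℝ => expectedEnvelopeDt P μ X b q.1 q.2) {q | 0 < q.2} :=
  continuousOn_of_dominated
    (fun q hq => (hP.integrable_neg_half_mul_sq_yosida hf hK hX b q.1 hq).1)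
    (fun _ hq => Eventually.of_forall fun _ => hP.norm_neg_half_mul_sq_yosida_le hf hK hq _)
    (integrable_const _)
    (Eventually.of_forall fun ω =>
      ((hP.continuousOn_yosida_affine hf hK (X ω) b).norm.pow 2).const_smul (-(1 / 2) : ℝ))

lemma continuousOn_expectedEnvelopeFDeriv (hP : IsProxMap f P) (hf : ConvexOn ℝ Set.univ f)
    (hK : LipschitzWith K f) (hX : Integrable X μ) (b : E) :
    ContinuousOn (expectedEnvelopeFDeriv P μ X b) {q | 0 < q.2} :=
  ((hP.continuousOn_expectedEnvelopeDc hf hK hX b).smul continuousOn_const).add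
    ((hP.continuousOn_expectedEnvelopeDt hf hK hX.1 b).smul continuousOn_const)

lemma integrable_moreauEnvelope_sub (hP : IsProxMap f P) (hf : ConvexOn ℝ Set.univ f)
    (hK : LipschitzWith K f) (hX : Integrable X μ) (b : E) (c : ℝ) (ht : 0 < t) :
    Integrable (fun ω => moreauEnvelope f t (c • X ω + b) - f b) μ :=
  (integrable_comp_of_lipschitzWith (hP.lipschitzWith_moreauEnvelope hf hK ht)
    ((hX.smul c).add (integrable_const b))).sub (integrable_const _)

lemma isSubgradientWithin_expectedEnvelope (hP : IsProxMap f P) (hf : ConvexOn ℝ Set.univ f)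
    (hK : LipschitzWith K f) (hX : Integrable X μ) (b : E) {q : ℝ × ℝ} (hq : 0 < q.2) :
    IsSubgradientWithin (fun q => expectedEnvelope f μ X b q.1 q.2)
      (expectedEnvelopeFDeriv P μ X b q) {q | 0 < q.2} q := by
  intro r hr
  have env_int := hP.integrable_moreauEnvelope_sub hf hK hX b q.1 hq
  have dc_int := (hP.integrable_inner_yosida hf hK hX b q.1 hq).mul_const (r.1 - q.1)
  have dt_int := (hP.integrable_neg_half_mul_sq_yosida hf hK hX.1 b q.1 hq).mul_const (r.2 - q.2)
  have linear_int : Integrable (fun ω => ⟪yosida P q.2 (q.1 • X ω + b), X ω⟫ * (r.1 - q.1) +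
      -(1 / 2) * ‖yosida P q.2 (q.1 • X ω + b)‖ ^ 2 * (r.2 - q.2)) μ := dc_int.add dt_int
  have pointwise (ω : Ω) : moreauEnvelope f q.2 (q.1 • X ω + b) - f b +
      (⟪yosida P q.2 (q.1 • X ω + b), X ω⟫ * (r.1 - q.1) +
        -(1 / 2) * ‖yosida P q.2 (q.1 • X ω + b)‖ ^ 2 * (r.2 - q.2)) ≤
      moreauEnvelope f r.2 (r.1 • X ω + b) - f b := by
    have hsub := (hP hq (q.1 • X ω + b)).moreauEnvelope_add_le hf hq hr (r.1 • X ω + b)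
    rw [add_sub_add_right_eq_sub, ← sub_smul, real_inner_smul_right, ← yosida] at hsub
    linarith
  calc expectedEnvelope f μ X b q.1 q.2 + expectedEnvelopeFDeriv P μ X b q (r - q)
      = ∫ ω, (moreauEnvelope f q.2 (q.1 • X ω + b) - f b +
          (⟪yosida P q.2 (q.1 • X ω + b), X ω⟫ * (r.1 - q.1) +
            -(1 / 2) * ‖yosida P q.2 (q.1 • X ω + b)‖ ^ 2 * (r.2 - q.2))) ∂μ := by
        rw [integral_add env_int linear_int, integral_add dc_int dt_int,
          integral_mul_const, integral_mul_const]
        rfl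
    _ ≤ expectedEnvelope f μ X b r.1 r.2 :=
        integral_mono (env_int.add linear_int)
          (hP.integrable_moreauEnvelope_sub hf hK hX b r.1 hr) pointwise

lemma convexOn_expectedEnvelope (hP : IsProxMap f P) (hf : ConvexOn ℝ Set.univ f)
    (hK : LipschitzWith K f) (hX : Integrable X μ) (b : E) :
    ConvexOn ℝ {q : ℝ × ℝ | 0 < q.2} (fun q => expectedEnvelope f μ X b q.1 q.2) :=
  convexOn_of_isSubgradientWithin (convex_halfSpace_gt (LinearMap.snd ℝ ℝ ℝ).isLinear 0)
    fun _ => hP.isSubgradientWithin_expectedEnvelope hf hK hX b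

lemma hasFDerivAt_expectedEnvelope (hP : IsProxMap f P) (hf : ConvexOn ℝ Set.univ f)
    (hK : LipschitzWith K f) (hX : Integrable X μ) (b : E) {q : ℝ × ℝ} (hq : 0 < q.2) :
    HasFDerivAt (fun q : ℝ × ℝ => expectedEnvelope f μ X b q.1 q.2)
      (expectedEnvelopeFDeriv P μ X b q) q := by
  have hnhds : {q : ℝ × ℝ | 0 < q.2} ∈ 𝓝 q :=
    (isOpen_lt continuous_const continuous_snd).mem_nhds hq
  exact hasFDerivAt_of_isSubgradientWithin hnhds
    (fun _ => hP.isSubgradientWithin_expectedEnvelope hf hK hX b)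
    ((hP.continuousOn_expectedEnvelopeFDeriv hf hK hX b).continuousAt hnhds)

lemma hasDerivAt_expectedEnvelope_left (hP : IsProxMap f P) (hf : ConvexOn ℝ Set.univ f)
    (hK : LipschitzWith K f) (hX : Integrable X μ) (b : E) (c : ℝ) (ht : 0 < t) :
    HasDerivAt (fun c' => expectedEnvelope f μ X b c' t) (expectedEnvelopeDc P μ X b c t) c := by
  simpa [Function.comp_def, expectedEnvelopeFDeriv] using
    (hP.hasFDerivAt_expectedEnvelope hf hK hX b (q := (c, t)) ht).comp_hasDerivAt c
      ((hasDerivAt_id c).prodMk (hasDerivAt_const c t))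

lemma hasDerivAt_expectedEnvelope_right (hP : IsProxMap f P) (hf : ConvexOn ℝ Set.univ f)
    (hK : LipschitzWith K f) (hX : Integrable X μ) (b : E) (c : ℝ) (ht : 0 < t) :
    HasDerivAt (fun t' => expectedEnvelope f μ X b c t') (expectedEnvelopeDt P μ X b c t) t := by
  simpa [Function.comp_def, expectedEnvelopeFDeriv] using
    (hP.hasFDerivAt_expectedEnvelope hf hK hX b (q := (c, t)) ht).comp_hasDerivAt t
      ((hasDerivAt_const t c).prodMk (hasDerivAt_id t))

end IsProxMap

end ExpectedEnvelope

theorem statement19_general {Ω E : Type*} [MeasurableSpace Ω] {μ : Measure Ω} [IsFiniteMeasure μ]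
    [NormedAddCommGroup E] [InnerProductSpace ℝ E] {f : E → ℝ} {K : ℝ≥0} {P : ℝ → E → E}
    {X : Ω → E} (hf : ConvexOn ℝ Set.univ f) (hK : LipschitzWith K f) (hP : IsProxMap f P)
    (hX : Integrable X μ) (b : E) :
    ConvexOn ℝ {cτ : ℝ × ℝ | 0 < cτ.2} (fun cτ => expectedEnvelope f μ X b cτ.1 cτ.2) ∧
    (∀ c τ : ℝ, 0 < τ → HasDerivAt (fun c' => expectedEnvelope f μ X b c' τ)
      (expectedEnvelopeDc P μ X b c τ) c) ∧
    (∀ c τ : ℝ, 0 < τ → HasDerivAt (fun τ' => expectedEnvelope f μ X b c τ')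
      (expectedEnvelopeDt P μ X b c τ) τ) ∧
    ContinuousOn (fun cτ : ℝ × ℝ => expectedEnvelopeDc P μ X b cτ.1 cτ.2) {cτ | 0 < cτ.2} ∧
    ContinuousOn (fun cτ : ℝ × ℝ => expectedEnvelopeDt P μ X b cτ.1 cτ.2) {cτ | 0 < cτ.2} :=
  ⟨hP.convexOn_expectedEnvelope hf hK hX b,
    fun c _ => hP.hasDerivAt_expectedEnvelope_left hf hK hX b c,
    fun c _ => hP.hasDerivAt_expectedEnvelope_right hf hK hX b c,
    hP.continuousOn_expectedEnvelopeDc hf hK hX b,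
    hP.continuousOn_expectedEnvelopeDt hf hK hX.1 b⟩

section Slope

variable {p : ℕ} {lam : Fin p → ℝ}

lemma sum_mul_abs_comp_perm_le_sortedL1 (hlamm : Monotone lam) (v : Fin p → ℝ)
    (σ : Equiv.Perm (Fin p)) : ∑ i, lam i * |v (σ i)| ≤ sortedL1 lam v := by
  have hsorted : Monotone (sortedAbs v) := Tuple.monotone_sort fun j => |v j|
  simpa [sortedAbs, sortedL1] using (hlamm.monovary hsorted).sum_mul_comp_perm_le_sum_mul
    (σ := σ.trans (Tuple.sort fun j => |v j|).symm)

lemma convexOn_sortedL1 (hlam : ∀ i, 0 ≤ lam i) (hlamm : Monotone lam) :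
    ConvexOn ℝ Set.univ (sortedL1 lam) := by
  refine ⟨convex_univ, fun v _ w _ a b ha hb _ => ?_⟩
  set σ := Tuple.sort fun j => |(a • v + b • w) j|
  have habs (i : Fin p) : |(a • v + b • w) i| ≤ a * |v i| + b * |w i| :=
    (abs_add_le _ _).trans_eq (by simp [abs_mul, abs_of_nonneg ha, abs_of_nonneg hb])
  calc sortedL1 lam (a • v + b • w) ≤ ∑ i, lam i * (a * |v (σ i)| + b * |w (σ i)|) :=
        Finset.sum_le_sum fun i _ => mul_le_mul_of_nonneg_left (habs (σ i)) (hlam i)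
    _ = a * ∑ i, lam i * |v (σ i)| + b * ∑ i, lam i * |w (σ i)| := by
        rw [Finset.mul_sum, Finset.mul_sum, ← Finset.sum_add_distrib]
        exact Finset.sum_congr rfl fun i _ => by ring
    _ ≤ a • sortedL1 lam v + b • sortedL1 lam w := by
        rw [smul_eq_mul, smul_eq_mul]
        gcongr <;> exact sum_mul_abs_comp_perm_le_sortedL1 hlamm _ σ

lemma lipschitzWith_sortedL1 (hlam : ∀ i, 0 ≤ lam i) (hlamm : Monotone lam) :
    LipschitzWith (∑ i, lam i).toNNReal (sortedL1 lam) := by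
  refine LipschitzWith.of_le_add_mul' _ fun v w => ?_
  set σ := Tuple.sort fun j => |v j|
  have habs (i : Fin p) : |v i| ≤ |w i| + dist v w :=
    calc |v i| ≤ |w i| + |v i - w i| := by linarith [abs_sub_abs_le_abs_sub (v i) (w i)]
      _ ≤ |w i| + dist v w := by gcongr; exact dist_le_pi_dist v w i
  calc sortedL1 lam v ≤ ∑ i, lam i * (|w (σ i)| + dist v w) :=
        Finset.sum_le_sum fun i _ => mul_le_mul_of_nonneg_left (habs (σ i)) (hlam i)
    _ = ∑ i, lam i * |w (σ i)| + (∑ i, lam i) * dist v w := by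
        rw [Finset.sum_mul, ← Finset.sum_add_distrib]
        exact Finset.sum_congr rfl fun i _ => mul_add _ _ _
    _ ≤ sortedL1 lam w + (∑ i, lam i) * dist v w := by
        gcongr
        exact sum_mul_abs_comp_perm_le_sortedL1 hlamm w σ

/-- The sorted ℓ1 norm as a function on Euclidean space. -/
noncomputable def euclideanSortedL1 (lam : Fin p → ℝ) (v : EuclideanSpace ℝ (Fin p)) : ℝ :=
  sortedL1 lam v.ofLp

/-- The SLOPE proximal operator with weights `t λ`, on Euclidean space. -/
noncomputable def euclideanSlopeProx (lam : Fin p → ℝ) (t : ℝ) (y : EuclideanSpace ℝ (Fin p)) :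
    EuclideanSpace ℝ (Fin p) :=
  WithLp.toLp 2 (slopeProx (fun j => t * lam j) y.ofLp)

lemma convexOn_euclideanSortedL1 (hlam : ∀ i, 0 ≤ lam i) (hlamm : Monotone lam) :
    ConvexOn ℝ Set.univ (euclideanSortedL1 lam) :=
  (convexOn_sortedL1 hlam hlamm).comp_linearMap (WithLp.linearEquiv 2 ℝ (Fin p → ℝ)).toLinearMap

lemma lipschitzWith_euclideanSortedL1 (hlam : ∀ i, 0 ≤ lam i) (hlamm : Monotone lam) :
    LipschitzWith (∑ i, lam i).toNNReal (euclideanSortedL1 lam) := by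
  simpa only [mul_one] using!
    (lipschitzWith_sortedL1 hlam hlamm).comp (PiLp.lipschitzWith_ofLp 2 fun _ => ℝ)

lemma slopeObj_smul_eq_mul_moreauObjective {t : ℝ} (ht : t ≠ 0) (lam y v : Fin p → ℝ) :
    slopeObj (fun j => t * lam j) y v =
      t * moreauObjective (euclideanSortedL1 lam) t (WithLp.toLp 2 y) (WithLp.toLp 2 v) := by
  simp only [slopeObj, sortedL1, moreauObjective, euclideanSortedL1, EuclideanSpace.real_norm_sq_eq,
    PiLp.sub_apply, mul_assoc, ← Finset.mul_sum]
  field_simp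

lemma slopeObj_slopeProx_le {lam y x : Fin p → ℝ}
    (hx : ∀ z, slopeObj lam y x ≤ slopeObj lam y z)
    (z : Fin p → ℝ) : slopeObj lam y (slopeProx lam y) ≤ slopeObj lam y z := by
  have hex : ∃ x, ∀ z, slopeObj lam y x ≤ slopeObj lam y z := ⟨x, hx⟩
  rw [slopeProx, dif_pos hex]
  exact hex.choose_spec z

lemma isProxMap_euclideanSlopeProx (hlam : ∀ i, 0 ≤ lam i) (hlamm : Monotone lam) :
    IsProxMap (euclideanSortedL1 lam) (euclideanSlopeProx lam) := by
  intro t ht y v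
  obtain ⟨x, hx⟩ := exists_isProx (lipschitzWith_euclideanSortedL1 hlam hlamm) ht y
  have hmin := slopeObj_slopeProx_le (lam := fun j => t * lam j) (y := y.ofLp) (x := x.ofLp)
    (fun z => by
      simp only [slopeObj_smul_eq_mul_moreauObjective ht.ne']
      exact mul_le_mul_of_nonneg_left (hx _) ht.le) v.ofLp
  simp only [slopeObj_smul_eq_mul_moreauObjective ht.ne'] at hmin
  exact le_of_mul_le_mul_left hmin ht

lemma moreauJ_eq_moreauEnvelope (lam x : Fin p → ℝ) (t : ℝ) :
    moreauJ lam x t = moreauEnvelope (euclideanSortedL1 lam) t (WithLp.toLp 2 x) :=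
  (WithLp.equiv 2 (Fin p → ℝ)).symm.iInf_congr fun v => by
    simp [moreauObjective, euclideanSortedL1, EuclideanSpace.real_norm_sq_eq]

end Slope

section Gaussian

instance isProbabilityMeasure_gaussPi (p : ℕ) : IsProbabilityMeasure (gaussPi p) := by
  unfold gaussPi
  infer_instance

/-- The Gaussian law with the normalization `1/p` of `F_p` absorbed into the measure. -/
noncomputable def normalizedGaussPi (p : ℕ) : Measure (Fin p → ℝ) :=
  (p : ℝ≥0)⁻¹ • gaussPi p

instance isFiniteMeasure_normalizedGaussPi (p : ℕ) : IsFiniteMeasure (normalizedGaussPi p) := by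
  unfold normalizedGaussPi
  infer_instance

lemma integral_normalizedGaussPi {p : ℕ} (g : (Fin p → ℝ) → ℝ) :
    ∫ h, g h ∂normalizedGaussPi p = (∫ h, g h ∂gaussPi p) / p := by
  rw [normalizedGaussPi, integral_smul_nnreal_measure, NNReal.smul_def, smul_eq_mul, NNReal.coe_inv,
    NNReal.coe_natCast, inv_mul_eq_div]

lemma integrable_toLp_normalizedGaussPi (p : ℕ) :
    Integrable (WithLp.toLp 2 : (Fin p → ℝ) → EuclideanSpace ℝ (Fin p)) (normalizedGaussPi p) := by
  refine Integrable.smul_measure_nnreal (Integrable.of_eval_piLp fun i => ?_)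
  exact (measurePreserving_eval (fun _ : Fin p => gaussianReal 0 1) i).integrable_comp_of_integrable
    ((memLp_id_gaussianReal 1).integrable le_rfl)

variable {p : ℕ} (lam β : Fin p → ℝ) (c τ : ℝ)

lemma Fp_eq_expectedEnvelope :
    Fp lam β c τ = expectedEnvelope (euclideanSortedL1 lam) (normalizedGaussPi p) (WithLp.toLp 2)
      (WithLp.toLp 2 β) c τ := by
  simp only [Fp, expectedEnvelope, integral_normalizedGaussPi, moreauJ_eq_moreauEnvelope]
  rfl

lemma FpDc_eq_expectedEnvelopeDc :
    FpDc lam β c τ = expectedEnvelopeDc (euclideanSlopeProx lam) (normalizedGaussPi p)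
      (WithLp.toLp 2) (WithLp.toLp 2 β) c τ := by
  have inner_eq (h : Fin p → ℝ) :
      ⟪yosida (euclideanSlopeProx lam) τ (c • WithLp.toLp 2 h + WithLp.toLp 2 β), WithLp.toLp 2 h⟫ =
        τ⁻¹ * ∑ i, (c * h i + β i - slopeProx (fun j => τ * lam j) (fun j => c * h j + β j) i) *
          h i := by
    rw [yosida, real_inner_smul_left, real_inner_comm]
    simp only [PiLp.inner_apply]
    rfl
  simp only [FpDc, expectedEnvelopeDc, integral_normalizedGaussPi, inner_eq, integral_const_mul]
  ring

lemma FpDτ_eq_expectedEnvelopeDt :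
    FpDτ lam β c τ = expectedEnvelopeDt (euclideanSlopeProx lam) (normalizedGaussPi p)
      (WithLp.toLp 2) (WithLp.toLp 2 β) c τ := by
  have norm_sq_eq (h : Fin p → ℝ) :
      ‖yosida (euclideanSlopeProx lam) τ (c • WithLp.toLp 2 h + WithLp.toLp 2 β)‖ ^ 2 =
        (τ ^ 2)⁻¹ *
          ∑ i, (c * h i + β i - slopeProx (fun j => τ * lam j) (fun j => c * h j + β j) i) ^ 2 := by
    rw [yosida, norm_smul, mul_pow, EuclideanSpace.real_norm_sq_eq, norm_inv, inv_pow,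
      Real.norm_eq_abs, sq_abs]
    rfl
  simp only [FpDτ, expectedEnvelopeDt, integral_normalizedGaussPi, norm_sq_eq, integral_const_mul]
  ring

end Gaussian

theorem statement19 {p : ℕ} (hp : 1 ≤ p) (β lam : Fin p → ℝ)
    (hlam : ∀ i, 0 ≤ lam i) (hlamm : Monotone lam) :
    ConvexOn ℝ {cτ : ℝ × ℝ | 0 < cτ.2} (fun cτ => Fp lam β cτ.1 cτ.2) ∧
    (∀ c τ : ℝ, 0 < τ →
      HasDerivAt (fun c' => Fp lam β c' τ) (FpDc lam β c τ) c) ∧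
    (∀ c τ : ℝ, 0 < τ →
      HasDerivAt (fun τ' => Fp lam β c τ') (FpDτ lam β c τ) τ) ∧
    ContinuousOn (fun cτ : ℝ × ℝ => FpDc lam β cτ.1 cτ.2) {cτ : ℝ × ℝ | 0 < cτ.2} ∧
    ContinuousOn (fun cτ : ℝ × ℝ => FpDτ lam β cτ.1 cτ.2) {cτ : ℝ × ℝ | 0 < cτ.2} := by
  simpa only [Fp_eq_expectedEnvelope, FpDc_eq_expectedEnvelopeDc, FpDτ_eq_expectedEnvelopeDt] using
    statement19_general (convexOn_euclideanSortedL1 hlam hlamm)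
      (lipschitzWith_euclideanSortedL1 hlam hlamm) (isProxMap_euclideanSlopeProx hlam hlamm)
      (integrable_toLp_normalizedGaussPi p) (WithLp.toLp 2 β)
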